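/- Let μ, α_max, v̄, k, q1_max be real numbers with k ≥ 0 and ε := μ − α_max − v̄ > 0 (Condition 1). Let α : ℝ → ℝ be continuous with 0 ≤ α(t) ≤ α_max and v : ℝ → ℝ integrable with 0 ≤ v(t) ≤ v̄ for all t ≥ 0. Let q1(0) ≥ 0, q2(0) ≥ 0 satisfy Condition 2: q1_max − q1(0) ≥ (k/(2ε))·q2(0)². Suppose q2 : ℝ → ℝ is continuous with q2(t) = q2(0) + ∫₀ᵗ (v(τ) + α(τ) − μ) dτ for t ∈ [0, T2], where T2 is the first time q2 vanishes, and q2(t) = 0 for t ≥ T2; and suppose q1 : ℝ → ℝ satisfies q1(t) = q1(0) + ∫₀ᵗ k·q2(τ) dτ for t ∈ [0, T2] and q1(t) = q1(T2) + ∫_{T2}ᵗ (v(τ) + α(τ) − μ) dτ for t ≥ T2. Then there exists T1 with q1(T1) = 0, q2(T1) = 0, and T1 ≤ q1(0)/ε + q2(0)/ε + (k/2)·(q2(0)/ε)², and moreover q1(t) ≤ q1_max for all t ∈ [0, T2]. -/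

import Mathlib

open MeasureTheory intervalIntegral

/-- main theorem of the paper. Under Condition 1
(`ε = μ - α_max - v̄ > 0`) and Condition 2
(`q1_max - q1 0 ≥ (k/(2ε)) * (q2 0)²`), the defender's switching strategy
drives the game state to zero: there is a time `T1` with
`q1 T1 = 0`, `q2 T1 = 0` and
`T1 ≤ q1 0 / ε + q2 0 / ε + (k/2) * (q2 0 / ε)²`, and the phase constraint
`q1 t ≤ q1_max` holds throughout the first phase `[0, T2]`. -/
theorem stmt6 (μ αmax vbar k q1max ε : ℝ) (hk : 0 ≤ k)
    (hεdef : ε = μ - αmax - vbar) (hε : 0 < ε)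
    (α v : ℝ → ℝ) (hαcont : Continuous α)
    (hα : ∀ t : ℝ, 0 ≤ t → 0 ≤ α t ∧ α t ≤ αmax)
    (hvint : ∀ a b : ℝ, IntervalIntegrable v volume a b)
    (hv : ∀ t : ℝ, 0 ≤ t → 0 ≤ v t ∧ v t ≤ vbar)
    (q1 q2 : ℝ → ℝ)
    (hq10 : 0 ≤ q1 0) (hq20 : 0 ≤ q2 0)
    (hcond2 : q1max - q1 0 ≥ (k / (2 * ε)) * (q2 0) ^ 2)
    (hq2cont : Continuous q2)
    (T2 : ℝ) (hT2 : 0 ≤ T2)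
    (hq2int : IntervalIntegrable q2 volume 0 T2)
    (hq2eq : ∀ t ∈ Set.Icc (0:ℝ) T2,
      q2 t = q2 0 + ∫ τ in (0:ℝ)..t, (v τ + α τ - μ))
    (hq2T2 : q2 T2 = 0)
    (hT2first : ∀ t ∈ Set.Ico (0:ℝ) T2, q2 t ≠ 0)
    (hq2zero : ∀ t : ℝ, T2 ≤ t → q2 t = 0)
    (hq1eq1 : ∀ t ∈ Set.Icc (0:ℝ) T2,
      q1 t = q1 0 + ∫ τ in (0:ℝ)..t, k * q2 τ)
    (hq1eq2 : ∀ t : ℝ, T2 ≤ t → q1 t = q1 T2 + ∫ τ in T2..t, (v τ + α τ - μ)) :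
    (∃ T1 : ℝ, q1 T1 = 0 ∧ q2 T1 = 0 ∧
      T1 ≤ q1 0 / ε + q2 0 / ε + (k / 2) * (q2 0 / ε) ^ 2) ∧
    ∀ t ∈ Set.Icc (0:ℝ) T2, q1 t ≤ q1max := by
  have hint : ∀ a b : ℝ, IntervalIntegrable (fun τ => v τ + α τ - μ) volume a b := fun a b =>
    ((hvint a b).add (hαcont.intervalIntegrable a b)).sub (continuous_const.intervalIntegrable a b)
  have key : ∀ a b : ℝ, 0 ≤ a → a ≤ b → ∫ τ in a..b, (v τ + α τ - μ) ≤ -ε * (b - a) := by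
    intro a b ha hab
    have h := intervalIntegral.integral_mono_on (g := fun _ => -ε) hab (hint a b)
      (continuous_const.intervalIntegrable a b) (by
        intro x hx
        have h1 := hα x (ha.trans hx.1)
        have h2 := hv x (ha.trans hx.1)
        linarith)
    rw [intervalIntegral.integral_const, smul_eq_mul] at h
    linarith
  have hup : ∀ t ∈ Set.Icc (0:ℝ) T2, q2 t ≤ q2 0 - ε * t := by
    intro t ht
    have := key 0 t le_rfl ht.1
    rw [hq2eq t ht]
    linarith
  have hpos : ∀ t ∈ Set.Icc (0:ℝ) T2, 0 ≤ q2 t := by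
    intro t ht
    have h1 := key t T2 ht.1 ht.2
    have h2 := intervalIntegral.integral_add_adjacent_intervals (hint 0 t) (hint t T2)
    have h3 := hq2eq t ht
    have h4 := hq2eq T2 ⟨hT2, le_rfl⟩
    have h5 : 0 ≤ ε * (T2 - t) := mul_nonneg hε.le (by linarith [ht.2])
    linarith
  have hI : ∀ t ∈ Set.Icc (0:ℝ) T2, q1 t ≤ q1 0 + k / (2 * ε) * (q2 0) ^ 2 := by
    intro t ht
    have h := intervalIntegral.integral_mono_on (μ := volume) (f := q2) (g := fun x => q2 0 - ε * x) ht.1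
      (hq2cont.intervalIntegrable 0 t)
      ((by fun_prop : Continuous fun x : ℝ => q2 0 - ε * x).intervalIntegrable 0 t)
      (fun x hx => hup x ⟨hx.1, hx.2.trans ht.2⟩)
    have he : ∫ x in (0:ℝ)..t, (q2 0 - ε * x) = q2 0 * t - ε * t ^ 2 / 2 := by
      rw [intervalIntegral.integral_sub (continuous_const.intervalIntegrable _ _)
        ((by fun_prop : Continuous fun x : ℝ => ε * x).intervalIntegrable 0 t),
        intervalIntegral.integral_const_mul, integral_id, intervalIntegral.integral_const,
        smul_eq_mul]
      ring
    rw [he] at h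
    have h2 : q2 0 * t - ε * t ^ 2 / 2 ≤ (q2 0) ^ 2 / (2 * ε) := by
      rw [le_div_iff₀ (by positivity)]
      nlinarith [sq_nonneg (q2 0 - ε * t)]
    have h3 := mul_le_mul_of_nonneg_left (h.trans h2) hk
    rw [hq1eq1 t ht, intervalIntegral.integral_const_mul]
    have h4 : k / (2 * ε) * (q2 0) ^ 2 = k * ((q2 0) ^ 2 / (2 * ε)) := by ring
    linarith
  refine ⟨?_, fun t ht => by linarith [hI t ht]⟩
  have hT2m : T2 ∈ Set.Icc (0:ℝ) T2 := ⟨hT2, le_rfl⟩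
  have hq1T : 0 ≤ q1 T2 := by
    rw [hq1eq1 T2 hT2m]
    have := intervalIntegral.integral_nonneg (μ := volume) hT2
      (fun x hx => mul_nonneg hk (hpos x hx))
    linarith
  have hTle : T2 ≤ T2 + q1 T2 / ε := by
    have : 0 ≤ q1 T2 / ε := by positivity
    linarith
  have hcont : ContinuousOn q1 (Set.Icc T2 (T2 + q1 T2 / ε)) := by
    have hc : Continuous fun t => q1 T2 + ∫ τ in T2..t, (v τ + α τ - μ) :=
      continuous_const.add (intervalIntegral.continuous_primitive hint T2)
    exact hc.continuousOn.congr (fun t ht => hq1eq2 t ht.1)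
  have hend : q1 (T2 + q1 T2 / ε) ≤ 0 := by
    have h1 := key T2 _ hT2 hTle
    rw [hq1eq2 _ hTle]
    have h2 : -ε * (T2 + q1 T2 / ε - T2) = - q1 T2 := by
      field_simp
      ring
    linarith
  obtain ⟨T1, hm, h0⟩ := intermediate_value_Icc' hTle hcont ⟨hend, hq1T⟩
  refine ⟨T1, h0, hq2zero T1 hm.1, hm.2.trans ?_⟩
  have h1 : T2 ≤ q2 0 / ε := by
    rw [le_div_iff₀ hε]
    linarith [hup T2 hT2m]
  have h2 : q1 T2 / ε ≤ (q1 0 + k / (2 * ε) * (q2 0) ^ 2) / ε :=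
    div_le_div_of_nonneg_right (hI T2 hT2m) hε.le
  have h3 : (q1 0 + k / (2 * ε) * (q2 0) ^ 2) / ε = q1 0 / ε + (k / 2) * (q2 0 / ε) ^ 2 := by
    field_simp
  linarith
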